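/- Let A be a finitely generated k-algebra that is an integral domain, Ā its integral closure in a finite field extension of its fraction field, and χ : A → k a character. Then the set of characters χ̃ : Ā → k extending χ is finite and nonempty. -/

import Mathlib

/-!
By Noether normalization `A` is finite over a polynomial ring `R`, and `Ā` is also the integral
closure of `R` in `L`. Let `E` be the separable closure of `Frac R` in `L`. Since `R` is noetherian
and integrally closed, its integral closure in `E` is a finite `R`-module, so it has only finitely
many characters over a given character of `R`. Each of them has at most one extension to `Ā`: if `q`
is the exponential characteristic, every `x` in `L` satisfies `x ^ q ^ n ∈ E` for some `n`, and
`q`-th powers are injective on the target. Existence is lying over, followed by an embedding of an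
algebraic extension of residue fields into an algebraically closed field.
-/

open scoped nonZeroDivisors

theorem nonempty_algHom_of_isIntegral_of_ker_le {R S Ω : Type*} [CommRing R] [CommRing S]
    [Algebra R S] [Algebra.IsIntegral R S] [Field Ω] [IsAlgClosed Ω] [Algebra R Ω]
    (h : RingHom.ker (algebraMap R S) ≤ RingHom.ker (algebraMap R Ω)) :
    Nonempty (S →ₐ[R] Ω) := by
  let P : Ideal R := RingHom.ker (algebraMap R Ω)
  have : P.IsPrime := RingHom.ker_isPrime _
  obtain ⟨Q, -, _, hQP⟩ := Ideal.exists_ideal_over_prime_of_isIntegral P (⊥ : Ideal S) h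
  have : Q.LiesOver P := ⟨hQP.symm⟩
  let : Algebra (R ⧸ P) Ω := (Ideal.Quotient.lift P (algebraMap R Ω) fun _ ↦ id).toAlgebra
  have : IsScalarTower R (R ⧸ P) Ω := .of_algebraMap_eq fun _ ↦ rfl
  have : FaithfulSMul (R ⧸ P) Ω :=
    (faithfulSMul_iff_algebraMap_injective _ _).2 (RingHom.kerLift_injective _)
  have : Algebra.IsIntegral (R ⧸ P) (S ⧸ Q) := .tower_top R
  have : Module.IsTorsionFree (R ⧸ P) (S ⧸ Q) := FaithfulSMul.to_isTorsionFree _ _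
  let φ : S ⧸ Q →ₐ[R ⧸ P] Ω := IsAlgClosed.lift
  exact ⟨(φ.restrictScalars R).comp (Ideal.Quotient.mkₐ R Q)⟩

theorem pow_expChar_pow_injective_of_algebra (R : Type*) {T : Type*} [CommRing R] [CommRing T]
    [IsReduced T] [Algebra R T] (q : ℕ) [hq : ExpChar R q] (n : ℕ) :
    Function.Injective fun x : T ↦ x ^ q ^ n := by
  nontriviality T
  cases hq with
  | zero => exact fun _ _ h ↦ by simpa using h
  | prime hprime =>
    have : CharP T q := (CharP.charP_iff_prime_eq_zero hprime).2 <| by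
      rw [← map_natCast (algebraMap R T), CharP.cast_eq_zero, map_zero]
    have : ExpChar T q := .prime hprime
    exact iterateFrobenius_inj T q n

theorem injective_algHom_comp_of_pow_mem_range {R S₀ S T : Type*} [CommRing R] [CommRing S₀]
    [CommRing S] [CommRing T] [IsReduced T] [Algebra R S₀] [Algebra R S] [Algebra R T]
    (q : ℕ) [ExpChar R q] (ι : S₀ →ₐ[R] S) (hι : ∀ x, ∃ n, x ^ q ^ n ∈ ι.range) :
    Function.Injective fun f : S →ₐ[R] T ↦ f.comp ι := by
  intro f g hfg
  ext x
  obtain ⟨n, y, hy⟩ := hι x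
  replace hy : ι y = x ^ q ^ n := hy
  refine pow_expChar_pow_injective_of_algebra R q n ?_
  calc f x ^ q ^ n = f (ι y) := by rw [hy, map_pow]
    _ = g (ι y) := DFunLike.congr_fun hfg y
    _ = g x ^ q ^ n := by rw [hy, map_pow]

theorem isIntegralClosure_tower_bot {R A S L : Type*} [CommRing R] [CommRing A] [CommRing S]
    [CommRing L] [Algebra R A] [Algebra R L] [Algebra A L] [Algebra S L] [IsScalarTower R A L]
    [Algebra.IsIntegral R A] [IsIntegralClosure S A L] :
    IsIntegralClosure S R L where
  algebraMap_injective := IsIntegralClosure.algebraMap_injective S A L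
  isIntegral_iff {x} := by
    rw [← IsIntegralClosure.isIntegral_iff (R := A) (A := S)]
    exact ⟨IsIntegral.tower_top, isIntegral_trans x⟩

theorem exists_pow_mem_range_lift_integralClosure {R E L S : Type*} [CommRing R] [Field E]
    [Field L] [Algebra R E] [Algebra E L] [Algebra R L] [IsScalarTower R E L] [CommRing S]
    [Algebra R S] [Algebra S L] [IsScalarTower R S L] [IsIntegralClosure S R L]
    [IsPurelyInseparable E L] (q : ℕ) [ExpChar E q] (x : S) :
    ∃ n, x ^ q ^ n ∈ (IsIntegralClosure.lift R S L : integralClosure R E →ₐ[R] S).range := by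
  obtain ⟨n, y, hy⟩ := IsPurelyInseparable.pow_mem E q (algebraMap S L x)
  have hy_int : IsIntegral R y := by
    rw [← isIntegral_algebraMap_iff (algebraMap E L).injective, hy]
    exact (IsIntegralClosure.isIntegral R L x).algebraMap.pow _
  refine ⟨n, ⟨y, hy_int⟩, IsIntegralClosure.algebraMap_injective S R L ?_⟩
  rw [map_pow, ← hy]
  exact IsIntegralClosure.algebraMap_lift R S L _

theorem finite_algHom_of_isIntegralClosure {R F L S Ω : Type*} [CommRing R] [IsDomain R]
    [IsNoetherianRing R] [IsIntegrallyClosed R] [Field F] [Algebra R F] [IsFractionRing R F]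
    [Field L] [Algebra F L] [FiniteDimensional F L] [Algebra R L] [IsScalarTower R F L]
    [CommRing S] [Algebra R S] [Algebra S L] [IsScalarTower R S L] [IsIntegralClosure S R L]
    [Field Ω] [Algebra R Ω] :
    Finite (S →ₐ[R] Ω) := by
  let E := separableClosure F L
  let q := ringExpChar F
  have : ExpChar R q :=
    (RingHom.expChar_iff (algebraMap R F) (IsFractionRing.injective R F) q).2 inferInstance
  have : IsScalarTower R E L := .of_algebraMap_eq' <| by
    rw [IsScalarTower.algebraMap_eq R F L, IsScalarTower.algebraMap_eq F E L,
      IsScalarTower.algebraMap_eq R F E, RingHom.comp_assoc]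
  have : ExpChar E q := expChar_of_injective_algebraMap (algebraMap F E).injective q
  have : Module.Finite R (integralClosure R E) := IsIntegralClosure.finite R F E _
  exact .of_injective _ <| injective_algHom_comp_of_pow_mem_range q _
    (exists_pow_mem_range_lift_integralClosure (E := E) (L := L) q)

theorem finiteDimensional_of_essFiniteType_of_isAlgebraic (R F L : Type*) [CommRing R] [IsDomain R]
    [Field F] [Algebra R F] [IsFractionRing R F] [Field L] [Algebra F L] [Algebra R L]
    [IsScalarTower R F L] [Algebra.EssFiniteType R L] [Algebra.IsAlgebraic R L] :
    FiniteDimensional F L := by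
  have : Algebra.EssFiniteType F L := .of_comp R F L
  have : Algebra.IsAlgebraic F L := (IsFractionRing.comap_isAlgebraic_iff (A := R)).1 ‹_›
  exact Algebra.finite_of_essFiniteType_of_isAlgebraic

theorem finite_algHom_integralClosure_of_finite (R A K L Ω : Type*) [CommRing R] [IsDomain R]
    [IsNoetherianRing R] [IsIntegrallyClosed R] [CommRing A] [IsDomain A] [Algebra R A]
    [FaithfulSMul R A] [Module.Finite R A] [Field K] [Algebra A K] [IsFractionRing A K]
    [Field L] [Algebra K L] [Algebra A L] [IsScalarTower A K L] [FiniteDimensional K L]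
    [Field Ω] [Algebra A Ω] :
    Finite (integralClosure A L →ₐ[A] Ω) := by
  let : Algebra R L := .compHom L (algebraMap R A)
  have : IsScalarTower R A L := .of_algebraMap_eq fun _ ↦ rfl
  let : Algebra R Ω := .compHom Ω (algebraMap R A)
  have : IsScalarTower R A Ω := .of_algebraMap_eq fun _ ↦ rfl
  have : FaithfulSMul A L := .trans A K L
  have : FaithfulSMul R L := .trans R A L
  let : Algebra (FractionRing R) L := FractionRing.liftAlgebra R L
  have : FiniteDimensional (FractionRing R) L := by
    have : Algebra.EssFiniteType A K := .of_isLocalization K A⁰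
    have : Algebra.EssFiniteType A L := .comp A K L
    have : Algebra.EssFiniteType R L := .comp R A L
    have : Algebra.IsAlgebraic A K := IsLocalization.isAlgebraic K A⁰
    have : Algebra.IsAlgebraic A L := .trans A K L
    have : Algebra.IsAlgebraic R L := .trans R A L
    exact finiteDimensional_of_essFiniteType_of_isAlgebraic R (FractionRing R) L
  have : IsIntegralClosure (integralClosure A L) R L := isIntegralClosure_tower_bot (A := A)
  have : Finite (integralClosure A L →ₐ[R] Ω) :=
    finite_algHom_of_isIntegralClosure (F := FractionRing R) (L := L)
  exact .of_injective _ (AlgHom.restrictScalars_injective R)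

theorem finite_algHom_integralClosure_of_finiteType (k A K L Ω : Type*) [Field k] [CommRing A]
    [IsDomain A] [Algebra k A] [Algebra.FiniteType k A] [Field K] [Algebra A K] [IsFractionRing A K]
    [Field L] [Algebra K L] [Algebra A L] [IsScalarTower A K L] [FiniteDimensional K L]
    [Field Ω] [Algebra A Ω] :
    Finite (integralClosure A L →ₐ[A] Ω) := by
  obtain ⟨s, g, hg_inj, hg_fin⟩ := exists_finite_inj_algHom_of_fg k A
  algebraize [g.toRingHom]
  have : Module.Finite (MvPolynomial (Fin s) k) A := hg_fin
  have : FaithfulSMul (MvPolynomial (Fin s) k) A :=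
    (faithfulSMul_iff_algebraMap_injective _ A).2 hg_inj
  exact finite_algHom_integralClosure_of_finite (MvPolynomial (Fin s) k) A K L Ω

theorem range_restrictScalars_algHom (k A S T : Type*) [CommSemiring k] [CommSemiring A]
    [Semiring S] [Semiring T] [Algebra k A] [Algebra k S] [Algebra k T] [Algebra A S] [Algebra A T]
    [IsScalarTower k A S] [IsScalarTower k A T] :
    Set.range (AlgHom.restrictScalars k : (S →ₐ[A] T) → (S →ₐ[k] T)) =
      {f | ∀ a, f (algebraMap A S a) = algebraMap A T a} := by
  ext f
  exact ⟨fun ⟨g, hg⟩ ↦ hg ▸ g.commutes, fun hf ↦ ⟨{ f with commutes' := hf }, rfl⟩⟩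

theorem characters_extending_to_integral_closure_finite_nonempty_general
    (k A K L Ω : Type*) [Field k]
    [CommRing A] [IsDomain A] [Algebra k A] [Algebra.FiniteType k A]
    [Field K] [Algebra A K] [IsFractionRing A K]
    [Field L] [Algebra K L] [Algebra A L] [IsScalarTower A K L] [FiniteDimensional K L]
    [Algebra k L] [IsScalarTower k A L] [Field Ω] [IsAlgClosed Ω] [Algebra k Ω]
    (χ : A →ₐ[k] Ω) :
    {χt : integralClosure A L →ₐ[k] Ω |
        ∀ a : A, χt ⟨algebraMap A L a, isIntegral_algebraMap⟩ = χ a}.Finite ∧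
      {χt : integralClosure A L →ₐ[k] Ω |
        ∀ a : A, χt ⟨algebraMap A L a, isIntegral_algebraMap⟩ = χ a}.Nonempty := by
  algebraize [χ.toRingHom]
  have : FaithfulSMul A L := .trans A K L
  have : Finite (integralClosure A L →ₐ[A] Ω) :=
    finite_algHom_integralClosure_of_finiteType k A K L Ω
  have : Nonempty (integralClosure A L →ₐ[A] Ω) := nonempty_algHom_of_isIntegral_of_ker_le <| by
    simp [(RingHom.injective_iff_ker_eq_bot _).1
      (FaithfulSMul.algebraMap_injective A (integralClosure A L))]
  have hrange := range_restrictScalars_algHom k A (integralClosure A L) Ω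
  exact ⟨hrange ▸ Set.finite_range _, hrange ▸ Set.range_nonempty _⟩

/-- Let `A` be a finitely generated algebra over an algebraically closed
field `k` of characteristic `0` which is an integral domain, `Ā` its integral closure in a
finite field extension `L` of its fraction field `K`, and `χ : A → k` a character
(`k`-algebra homomorphism). Then the set of characters `χ̃ : Ā → k` extending `χ` is
finite and nonempty. -/
theorem characters_extending_to_integral_closure_finite_nonempty
    (k A K L : Type*) [Field k] [IsAlgClosed k] [CharZero k]
    [CommRing A] [IsDomain A] [Algebra k A] [Algebra.FiniteType k A]
    [Field K] [Algebra A K] [IsFractionRing A K]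
    [Field L] [Algebra K L] [Algebra A L] [IsScalarTower A K L] [FiniteDimensional K L]
    [Algebra k K] [IsScalarTower k A K] [Algebra k L] [IsScalarTower k K L] [IsScalarTower k A L]
    (χ : A →ₐ[k] k) :
    {χt : integralClosure A L →ₐ[k] k |
        ∀ a : A, χt ⟨algebraMap A L a, isIntegral_algebraMap⟩ = χ a}.Finite ∧
      {χt : integralClosure A L →ₐ[k] k |
        ∀ a : A, χt ⟨algebraMap A L a, isIntegral_algebraMap⟩ = χ a}.Nonempty := by
  exact characters_extending_to_integral_closure_finite_nonempty_general k A K L k χ
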